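/- Let A be an N×N real matrix, B ∈ ℝ^N, and let ρ : ℝ^N \ {0} → ℝ be twice continuously differentiable with ⟨∇ρ(x), A x⟩ = 0 for all x ≠ 0. Let x : I → ℝ^N be a differentiable curve on an interval I with x(t) ≠ 0 and ẋ(t) = A x(t) + B u(t) for a function u : I → ℝ, and set p(t) = ∇ρ(x(t)). Then p satisfies the adjoint-type equation ṗ(t) = − Aᵀ p(t) + (∂²ρ/∂x²)(x(t)) B u(t). -/

import Mathlib

open Matrix
open scoped RealInnerProductSpace

/-!
Differentiating the identity `⟪∇ρ, F⟫ = c` and using that the Hessian `H` of `ρ` is self-adjoint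
gives `H F + F'† ∇ρ = 0`. Hence, along a solution of `ẋ = F(x) + w`, the chain rule yields
`ṗ = H (F(x) + w) = -F'† p + H w` for `p = ∇ρ(x)`.
-/

section Hilbert

open ContinuousLinearMap Filter InnerProductSpace
open scoped Gradient InnerProduct Topology

variable {E : Type*} [NormedAddCommGroup E] [InnerProductSpace ℝ E] [CompleteSpace E]
  {ρ : E → ℝ} {F : E → E} {F' : E →L[ℝ] E} {c : ℝ} {y : E}

variable (E) in
/-- The Riesz isomorphism of a real Hilbert space as a linear isometry. Mathlib's `toDual ℝ E` is
only semilinear over `starRingEnd ℝ`, so the linear chain rule does not apply to it. -/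
noncomputable def realToDual : E ≃ₗᵢ[ℝ] StrongDual ℝ E where
  toFun := toDual ℝ E
  invFun := (toDual ℝ E).symm
  left_inv := (toDual ℝ E).left_inv
  right_inv := (toDual ℝ E).right_inv
  map_add' := map_add (toDual ℝ E)
  map_smul' c x := by simp
  norm_map' := (toDual ℝ E).norm_map

theorem gradient_eq_realToDual_symm_comp_fderiv (ρ : E → ℝ) :
    ∇ ρ = (realToDual E).symm ∘ fderiv ℝ ρ :=
  rfl

theorem contDiffAt_gradient {m n : WithTop ℕ∞} (hρ : ContDiffAt ℝ n ρ y) (hmn : m + 1 ≤ n) :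
    ContDiffAt ℝ m (∇ ρ) y :=
  (realToDual E).symm.contDiff.contDiffAt.comp y (hρ.fderiv_right hmn)

theorem differentiableAt_gradient (hρ : ContDiffAt ℝ 2 ρ y) : DifferentiableAt ℝ (∇ ρ) y :=
  (contDiffAt_gradient hρ one_add_one_eq_two.le).differentiableAt one_ne_zero

theorem inner_fderiv_gradient_apply (ρ : E → ℝ) (y v w : E) :
    ⟪fderiv ℝ (∇ ρ) y v, w⟫ = fderiv ℝ (fderiv ℝ ρ) y v w := by
  rw [gradient_eq_realToDual_symm_comp_fderiv, (realToDual E).symm.comp_fderiv]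
  exact toDual_symm_apply

theorem isSelfAdjoint_fderiv_gradient_iff :
    IsSelfAdjoint (fderiv ℝ (∇ ρ) y) ↔ IsSymmSndFDerivAt ℝ ρ y := by
  simp only [isSelfAdjoint_iff_isSymmetric, LinearMap.IsSymmetric, coe_coe, IsSymmSndFDerivAt,
    ← inner_fderiv_gradient_apply, real_inner_comm]

theorem hasGradientAt_inner {G : E → E} {G' : E →L[ℝ] E} (hG : HasFDerivAt G G' y)
    (hF : HasFDerivAt F F' y) :
    HasGradientAt (fun z ↦ ⟪G z, F z⟫) ((G'†) (F y) + (F'†) (G y)) y := by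
  rw [hasGradientAt_iff_hasFDerivAt]
  refine (hG.inner ℝ hF).congr_fderiv ?_
  ext v
  simp [adjoint_inner_left, real_inner_comm, add_comm, fderivInnerCLM_apply]

theorem fderiv_gradient_apply_of_inner_gradient_eventuallyEq_const (hρ : ContDiffAt ℝ 2 ρ y)
    (hF : HasFDerivAt F F' y) (hc : ∀ᶠ z in 𝓝 y, ⟪∇ ρ z, F z⟫ = c) :
    fderiv ℝ (∇ ρ) y (F y) = -(F'†) (∇ ρ y) := by
  have hdiff : DifferentiableAt ℝ (∇ ρ) y := differentiableAt_gradient hρ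
  have hself : (fderiv ℝ (∇ ρ) y)† = fderiv ℝ (∇ ρ) y :=
    (isSelfAdjoint_fderiv_gradient_iff.mpr (hρ.isSymmSndFDerivAt (by simp))).adjoint_eq
  have hgrad := hasGradientAt_inner hdiff.hasFDerivAt hF
  have hzero := (hasGradientAt_const y c).congr_of_eventuallyEq hc
  rw [hself] at hgrad
  exact eq_neg_of_add_eq_zero_left (hgrad.unique hzero)

theorem momentum_adjoint_equation_general {x : ℝ → E} {w : E} {s : Set ℝ} {t : ℝ}
    (hρ : ContDiffAt ℝ 2 ρ (x t)) (hF : HasFDerivAt F F' (x t))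
    (hc : ∀ᶠ z in 𝓝 (x t), ⟪∇ ρ z, F z⟫ = c)
    (hx : HasDerivWithinAt x (F (x t) + w) s t) :
    HasDerivWithinAt (fun τ ↦ ∇ ρ (x τ)) (-(F'†) (∇ ρ (x t)) + fderiv ℝ (∇ ρ) (x t) w) s t := by
  rw [← fderiv_gradient_apply_of_inner_gradient_eventuallyEq_const hρ hF hc, ← map_add]
  exact (differentiableAt_gradient hρ).hasFDerivAt.comp_hasDerivWithinAt t hx

end Hilbert

theorem adjoint_toEuclideanCLM {𝕜 n : Type*} [RCLike 𝕜] [Fintype n] [DecidableEq n]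
    (A : Matrix n n 𝕜) :
    ContinuousLinearMap.adjoint (toEuclideanCLM (𝕜 := 𝕜) A) = toEuclideanCLM (𝕜 := 𝕜) Aᴴ :=
  (map_star (toEuclideanCLM (𝕜 := 𝕜)) A).symm

/-- **Adjoint-type equation for the momentum `p = ∇ρ(x)`.**
Let `ρ` be `C²` away from the origin with `⟪∇ρ(x), A x⟫ = 0` for `x ≠ 0`, and let
`x(·)` be a differentiable curve on an interval `I` with `x(t) ≠ 0` and
`ẋ = A x + B u`.  Then `p(t) = ∇ρ(x(t))` satisfies
`ṗ = − Aᵀ p + (∂²ρ/∂x²)(x) B u`. -/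
theorem momentum_adjoint_equation
    (N : ℕ) (A : Matrix (Fin N) (Fin N) ℝ) (B : EuclideanSpace ℝ (Fin N))
    (ρ : EuclideanSpace ℝ (Fin N) → ℝ)
    (hρ : ContDiffOn ℝ 2 ρ {x | x ≠ 0})
    (hinv : ∀ x : EuclideanSpace ℝ (Fin N), x ≠ 0 →
      ⟪gradient ρ x, Matrix.toEuclideanLin A x⟫ = 0)
    (I : Set ℝ) (hI : ∃ a b : ℝ, I = Set.Icc a b)
    (x : ℝ → EuclideanSpace ℝ (Fin N)) (u : ℝ → ℝ)
    (hx0 : ∀ t ∈ I, x t ≠ 0)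
    (hx : ∀ t ∈ I, HasDerivAt x (Matrix.toEuclideanLin A (x t) + u t • B) t) :
    ∀ t ∈ I, HasDerivAt (fun s => gradient ρ (x s))
      (- Matrix.toEuclideanLin Aᵀ (gradient ρ (x t)) +
        u t • fderiv ℝ (gradient ρ) (x t) B) t := by
  intro t ht
  have hU : {y | y ≠ 0} ∈ nhds (x t) := isOpen_ne.mem_nhds (hx0 t ht)
  have hp := momentum_adjoint_equation_general (hρ.contDiffAt hU)
    (toEuclideanCLM (𝕜 := ℝ) A).hasFDerivAt (Filter.mem_of_superset hU hinv)
    ((hx t ht).hasDerivWithinAt (s := Set.univ))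
  rwa [hasDerivWithinAt_univ, adjoint_toEuclideanCLM, conjTranspose_eq_transpose_of_trivial,
    map_smul] at hp
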